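/- With A(v) = -2·log v - 4·log(2π) + (2πv)/3 - 8·Σ_{n=1}^∞ log(1 - e^{-2πnv}), the function A is strictly increasing on [1, ∞). -/

import Mathlib

open Real

/-!
Up to additive constants `A(v)` is `-8 log (v ^ (1/4) |η(iv)|)`, where `η` is the Dedekind eta
function, so the transformation law `η(-1/z) = √(z/i) η(z)` gives `A(1/v) = A(v)`. On the other
hand `A` is strictly convex on `(0, ∞)`, because `log v` is strictly concave and every
`log (1 - e^{-2πnv})` is concave. If `1 ≤ x < y`, then `x` lies strictly between `1/y` and `y`,
at which `A` takes the same value, whence `A(x) < A(y)`.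
-/

section Convexity

open Set

theorem concaveOn_tsum {𝕜 E β ι : Type*} [Semiring 𝕜] [PartialOrder 𝕜] [AddCommMonoid E]
    [SMul 𝕜 E] [AddCommMonoid β] [PartialOrder β] [IsOrderedAddMonoid β] [TopologicalSpace β]
    [OrderClosedTopology β] [ContinuousAdd β] [DistribSMul 𝕜 β] [ContinuousConstSMul 𝕜 β]
    {s : Set E} {f : ι → E → β} (hs : Convex 𝕜 s) (hf : ∀ i, ConcaveOn 𝕜 s (f i))
    (hsum : ∀ x ∈ s, Summable fun i ↦ f i x) : ConcaveOn 𝕜 s fun x ↦ ∑' i, f i x := by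
  refine ⟨hs, fun x hx y hy a b ha hb hab ↦ ?_⟩
  have hx' : HasSum (fun i ↦ a • f i x) (a • ∑' i, f i x) := (hsum x hx).hasSum.const_smul a
  have hy' : HasSum (fun i ↦ b • f i y) (b • ∑' i, f i y) := (hsum y hy).hasSum.const_smul b
  exact hasSum_le (fun i ↦ (hf i).2 hx hy ha hb hab) (hx'.add hy')
    (hsum _ (hs hx hy ha hb hab)).hasSum

theorem strictMonoOn_Ici_one_of_strictConvexOn_of_map_inv {𝕜 β : Type*} [Field 𝕜] [LinearOrder 𝕜]
    [IsStrictOrderedRing 𝕜] [AddCommGroup β] [LinearOrder β] [IsOrderedAddMonoid β] [Module 𝕜 β]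
    [PosSMulStrictMono 𝕜 β] {f : 𝕜 → β} (hf : StrictConvexOn 𝕜 (Ioi 0) f)
    (hinv : ∀ x, 0 < x → f x⁻¹ = f x) : StrictMonoOn f (Ici 1) := by
  intro x (hx : 1 ≤ x) y _ hxy
  have hy : 1 < y := hx.trans_lt hxy
  have hy₀ : 0 < y := zero_lt_one.trans hy
  have hyx : y⁻¹ < x := (inv_lt_one_of_one_lt₀ hy).trans_le hx
  calc
    f x < max (f y⁻¹) (f y) :=
      hf.lt_on_openSegment (inv_pos.mpr hy₀) hy₀ (hyx.trans hxy).ne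
        (Ioo_subset_openSegment ⟨hyx, hxy⟩)
    _ = f y := by rw [hinv y hy₀, max_self]

theorem concaveOn_log_comp {E : Type*} [AddCommMonoid E] [SMul ℝ E] {s : Set E} {f : E → ℝ}
    (hf : ConcaveOn ℝ s f) (hpos : ∀ x ∈ s, 0 < f x) : ConcaveOn ℝ s fun x ↦ log (f x) := by
  refine ⟨hf.1, fun x hx y hy a b ha hb hab ↦ ?_⟩
  have hfx : f x ∈ Ioi 0 := hpos x hx
  have hfy : f y ∈ Ioi 0 := hpos y hy
  calc
    a • log (f x) + b • log (f y) ≤ log (a • f x + b • f y) :=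
      strictConcaveOn_log_Ioi.concaveOn.2 hfx hfy ha hb hab
    _ ≤ log (f (a • x + b • y)) :=
      log_le_log (convex_Ioi 0 hfx hfy ha hb hab) (hf.2 hx hy ha hb hab)

theorem concaveOn_log_one_sub_exp : ConcaveOn ℝ (Iio 0) fun t ↦ log (1 - exp t) :=
  concaveOn_log_comp
    ((concaveOn_const 1 (convex_Iio 0)).sub (convexOn_exp.subset (subset_univ _) (convex_Iio 0)))
    fun _ ht ↦ sub_pos.mpr (exp_lt_one_iff.mpr ht)

theorem concaveOn_log_one_sub_exp_mul {c : ℝ} (hc : c < 0) :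
    ConcaveOn ℝ (Ioi 0) fun v ↦ log (1 - exp (c * v)) := by
  have hcomp := concaveOn_log_one_sub_exp.comp_linearMap (LinearMap.mulLeft ℝ c)
  have hsub : Ioi 0 ⊆ LinearMap.mulLeft ℝ c ⁻¹' Iio 0 := fun _ hv ↦ mul_neg_of_neg_of_pos hc hv
  exact hcomp.subset hsub (convex_Ioi 0)

end Convexity

section DedekindEta

open Complex ModularForm
open UpperHalfPlane (upperHalfPlaneSet)

theorem summable_log_norm_one_sub_eta_q {z : ℂ} (hz : z ∈ upperHalfPlaneSet) :
    Summable fun n ↦ Real.log ‖1 - eta_q n z‖ := by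
  simpa only [← sub_eq_add_neg] using (summable_eta_q ⟨z, hz⟩).summable_log_norm_one_add

theorem log_norm_eta {z : ℂ} (hz : z ∈ upperHalfPlaneSet) :
    Real.log ‖η z‖ = -(π * z.im / 12) + ∑' n, Real.log ‖1 - eta_q n z‖ := by
  have hpos (n : ℕ) : 0 < ‖1 - eta_q n z‖ := norm_pos_iff.mpr (one_sub_eta_q_ne_zero n hz)
  have hlead : ‖Function.Periodic.qParam 24 z‖ = Real.exp (-(π * z.im / 12)) := by
    rw [Function.Periodic.norm_qParam]
    ring_nf
  have hprod : ‖∏' n, (1 - eta_q n z)‖ = Real.exp (∑' n, Real.log ‖1 - eta_q n z‖) := by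
    rw [(multipliableLocallyUniformlyOn_eta.multipliable hz).norm_tprod,
      Real.rexp_tsum_eq_tprod hpos (summable_log_norm_one_sub_eta_q hz)]
  rw [ModularForm.eta, norm_mul, hlead, hprod, ← Real.exp_add, Real.log_exp]

theorem norm_csqrt (z : ℂ) : ‖Complex.sqrt z‖ = √‖z‖ := by
  simpa [Complex.sqrt, Real.sqrt_eq_rpow] using norm_cpow_inv_nat z 2

theorem norm_eta_neg_one_div {z : ℂ} (hz : z ∈ upperHalfPlaneSet) :
    ‖η (-1 / z)‖ = √‖z‖ * ‖η z‖ := by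
  simpa [norm_csqrt] using congrArg norm (eta_comp_eq_csqrt_I_inv hz)

theorem I_mul_ofReal_mem_upperHalfPlaneSet {v : ℝ} (hv : 0 < v) : I * v ∈ upperHalfPlaneSet := by
  simpa using hv

theorem norm_one_sub_eta_q_I_mul (n : ℕ) {v : ℝ} (hv : 0 ≤ v) :
    ‖1 - eta_q n (I * v)‖ = 1 - Real.exp (-2 * π * (n + 1) * v) := by
  have hle : Real.exp (-2 * π * (n + 1) * v) ≤ 1 := by
    rw [Real.exp_le_one_iff]
    have : 0 ≤ 2 * π * (n + 1) * v := by positivity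
    linarith
  have hexp : 2 * π * I * (n + 1) * (I * v) = ((-2 * π * (n + 1) * v : ℝ) : ℂ) := by
    push_cast
    linear_combination 2 * (π : ℂ) * (n + 1) * v * I_mul_I
  rw [eta_q_eq_cexp, hexp, ← ofReal_exp, ← ofReal_one, ← ofReal_sub, norm_real,
    Real.norm_of_nonneg (sub_nonneg.mpr hle)]

theorem log_norm_eta_I_mul {v : ℝ} (hv : 0 < v) :
    Real.log ‖η (I * v)‖ =
      -(π * v / 12) + ∑' n : ℕ, Real.log (1 - Real.exp (-2 * π * (n + 1) * v)) := by
  simp [log_norm_eta (I_mul_ofReal_mem_upperHalfPlaneSet hv), norm_one_sub_eta_q_I_mul _ hv.le]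

theorem log_norm_eta_I_mul_inv {v : ℝ} (hv : 0 < v) :
    Real.log ‖η (I * (v⁻¹ : ℝ))‖ = Real.log v / 2 + Real.log ‖η (I * v)‖ := by
  have hz := I_mul_ofReal_mem_upperHalfPlaneSet hv
  have hinv : I * (v⁻¹ : ℝ) = -1 / (I * v) := by
    simp [neg_div, mul_comm]
  have hnorm : ‖I * v‖ = v := by simp [hv.le]
  rw [hinv, norm_eta_neg_one_div hz, hnorm,
    Real.log_mul (Real.sqrt_ne_zero'.mpr hv) (norm_ne_zero_iff.mpr (eta_ne_zero hz)),
    Real.log_sqrt hv.le]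

end DedekindEta

section GreenConstant

open Set

/-- The function `A(v) = -2 log v - 4 log(2π) + 2πv/3 - 8 Σ_{n≥1} log(1 - e^{-2πnv})`, with the
series indexed from `n = 0`. It is meaningful only for `v > 0`, where the series converges. -/
noncomputable def greenConstant (v : ℝ) : ℝ :=
  -2 * log v - 4 * log (2 * π) + 2 * π * v / 3 - 8 * ∑' n : ℕ, log (1 - exp (-2 * π * (n + 1) * v))

theorem greenConstant_eq_log_norm_eta {v : ℝ} (hv : 0 < v) :
    greenConstant v =
      -2 * log v - 4 * log (2 * π) - 8 * log ‖ModularForm.eta (Complex.I * v)‖ := by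
  rw [greenConstant, log_norm_eta_I_mul hv]
  ring

theorem greenConstant_inv {v : ℝ} (hv : 0 < v) : greenConstant v⁻¹ = greenConstant v := by
  rw [greenConstant_eq_log_norm_eta hv, greenConstant_eq_log_norm_eta (inv_pos.mpr hv), log_inv,
    log_norm_eta_I_mul_inv hv]
  ring

theorem summable_log_one_sub_exp {v : ℝ} (hv : 0 < v) :
    Summable fun n : ℕ ↦ log (1 - exp (-2 * π * (n + 1) * v)) := by
  simpa only [norm_one_sub_eta_q_I_mul _ hv.le] using
    summable_log_norm_one_sub_eta_q (I_mul_ofReal_mem_upperHalfPlaneSet hv)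

theorem concaveOn_tsum_log_one_sub_exp :
    ConcaveOn ℝ (Ioi 0) fun v ↦ ∑' n : ℕ, log (1 - exp (-2 * π * (n + 1) * v)) :=
  concaveOn_tsum (convex_Ioi 0)
    (fun n ↦ concaveOn_log_one_sub_exp_mul <|
      mul_neg_of_neg_of_pos (by linarith [pi_pos]) n.cast_add_one_pos)
    fun _ ↦ summable_log_one_sub_exp

theorem strictConvexOn_greenConstant : StrictConvexOn ℝ (Ioi 0) greenConstant := by
  refine ⟨convex_Ioi 0, fun x hx y hy hxy a b ha hb hab ↦ ?_⟩
  have hlog := strictConcaveOn_log_Ioi.2 hx hy hxy ha hb hab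
  have hsum := concaveOn_tsum_log_one_sub_exp.2 hx hy ha.le hb.le hab
  simp only [greenConstant, smul_eq_mul] at hlog hsum ⊢
  linear_combination 2 * hlog + 8 * hsum + 4 * log (2 * π) * hab

end GreenConstant

/-- With `A(v) = -2 log v - 4 log(2π) + 2πv/3 - 8 Σ_{n≥1} log(1 - e^{-2πnv})`,
the function `A` is strictly increasing on `[1, ∞)`. -/
theorem green_constant_strictMono
    (A : ℝ → ℝ)
    (hA : ∀ v : ℝ, 0 < v → A v = -2 * Real.log v - 4 * Real.log (2 * π) + 2 * π * v / 3
      - 8 * ∑' n : ℕ, Real.log (1 - Real.exp (-2 * π * (n + 1) * v))) :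
    StrictMonoOn A (Set.Ici 1) := by
  have hmono : StrictMonoOn greenConstant (Set.Ici 1) :=
    strictMonoOn_Ici_one_of_strictConvexOn_of_map_inv strictConvexOn_greenConstant
      fun _ ↦ greenConstant_inv
  exact hmono.congr fun v hv ↦ (hA v (zero_lt_one.trans_le hv)).symm
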